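/- arXiv:0811.2476 — 2 statements merged into one kernel-verified Lean document; each statement's English description precedes it below -/
import Mathlib

section
/- The PF-D0 coefficient function b3 satisfies lim_{v→0⁺} b3(v) = 270875723/17740800 and lim_{v→0⁺} (b3(v) − 270875723/17740800)/v² = −16301796103/6457651200; in particular b3 tends to the corresponding coefficient of the classical Quinlan–Tremaine method as v → 0. -/
open Filter

/-- The variable coefficient `b₁(v)` of the phase-fitted method PF-D0. -/
noncomputable def pfb1 (v : ℝ) : ℝ :=
  (((-124184636) * Real.cos v + 70378348 * Real.cos (2 * v) - 24862148 * Real.cos (3 * v)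
        + 5153611 * Real.cos (4 * v)) * v ^ 2
      + 25 * (3013169 * v ^ 2 - 16128 * Real.cos (3 * v) + 32256 * Real.cos (4 * v)
        - 32256 * Real.cos (5 * v) + 16128 * Real.cos (6 * v)))
    / (206438400 * v ^ 2 * (Real.sin (v / 2)) ^ 10)

/-- The variable coefficient `b₂(v)` of the phase-fitted method PF-D0. -/
noncomputable def pfb2 (v : ℝ) : ℝ :=
  (v ^ 2 * (159588050 * Real.cos v - 85350160 * Real.cos (2 * v)
        + 16708985 * Real.cos (3 * v) - 5153611 * Real.cos (5 * v))
      - 16 * (6496079 * v ^ 2 - 252000 * Real.cos (3 * v) + 504000 * Real.cos (4 * v)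
        - 504000 * Real.cos (5 * v) + 252000 * Real.cos (6 * v)))
    / (206438400 * v ^ 2 * (Real.sin (v / 2)) ^ 10)

/-- The variable coefficient `b₃(v)` of the phase-fitted method PF-D0. -/
noncomputable def pfb3 (v : ℝ) : ℝ :=
  (((-367257540) * Real.cos v + 183567900 * Real.cos (2 * v)
        - 16708985 * Real.cos (4 * v) + 24862148 * Real.cos (5 * v)) * v ^ 2
      + 81 * (3175117 * v ^ 2 - 224000 * Real.cos (3 * v) + 448000 * Real.cos (4 * v)
        - 448000 * Real.cos (5 * v) + 224000 * Real.cos (6 * v)))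
    / (206438400 * v ^ 2 * (Real.sin (v / 2)) ^ 10)

/-- The variable coefficient `b₄(v)` of the phase-fitted method PF-D0. -/
noncomputable def pfb4 (v : ℝ) : ℝ :=
  (30675810 * v ^ 2 * Real.cos v - 42958788 * v ^ 2
      + 75 * (161280 - 611893 * v ^ 2) * Real.cos (3 * v)
      + 140 * (152411 * v ^ 2 - 172800) * Real.cos (4 * v)
      + (24192000 - 17594587 * v ^ 2) * Real.cos (5 * v)
      - 12096000 * Real.cos (6 * v))
    / (51609600 * v ^ 2 * (Real.sin (v / 2)) ^ 10)

/-- The variable coefficient `b₅(v)` of the phase-fitted method PF-D0. -/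
noncomputable def pfb5 (v : ℝ) : ℝ :=
  ((-61351620) * v ^ 2 * Real.cos (2 * v) + 85936557 * v ^ 2
      + 30 * (6120959 * v ^ 2 - 1411200) * Real.cos (3 * v)
      + 25 * (3386880 - 3191761 * v ^ 2) * Real.cos (4 * v)
      + (62092318 * v ^ 2 - 84672000) * Real.cos (5 * v)
      + 42336000 * Real.cos (6 * v))
    / (103219200 * v ^ 2 * (Real.sin (v / 2)) ^ 10)

/-- The variable coefficient `b₆(v)` of the phase-fitted method PF-D0. -/
noncomputable def pfb6 (v : ℝ) : ℝ :=
  (((-171873114) * Real.cos v + 171835152 * Real.cos (2 * v)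
        - 257184477 * Real.cos (3 * v) + 103937264 * Real.cos (4 * v)
        - 75329225 * Real.cos (5 * v)) * v ^ 2
      + 50803200 * (Real.cos (3 * v) - 2 * Real.cos (4 * v)
        + 2 * Real.cos (5 * v) - Real.cos (6 * v)))
    / (103219200 * v ^ 2 * (Real.sin (v / 2)) ^ 10)

/-!
Numerator and denominator of `pfb3` both vanish to order `v ^ 12` at `0`. Since
`2 * (1 - cos v) = v ^ 2 - v ^ 4 / 12 + O(v ^ 6)`, the denominator is
`201600 * v ^ 12 * (1 - 5 / 12 * v ^ 2) + O(v ^ 16)`. Replacing every cosine in the numerator by its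
Taylor polynomial of degree `14` shows that, up to `O(v ^ 16)`, the numerator is this expression
times the claimed quadratic Taylor polynomial. Dividing leaves an error `O(v ^ 4)`.
-/

open Asymptotics Topology

section Asymptotics

variable {α 𝕜 : Type*} [NormedField 𝕜] {l : Filter α} {f g : α → 𝕜} {a b : 𝕜}

theorem isBigO_mul_of_continuousAt [TopologicalSpace α] {x : α} {p : α → 𝕜}
    (hp : ContinuousAt p x) (hfg : f =O[𝓝 x] g) : (fun y => p y * f y) =O[𝓝 x] g := by
  simpa only [one_mul] using (hp.tendsto.isBigO_one 𝕜).mul hfg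

theorem isBigO_pow_succ_sub_pow_succ {h e : α → 𝕜} (hf : f =O[l] h) (hg : g =O[l] h)
    (hfg : (fun x => f x - g x) =O[l] e) (n : ℕ) :
    (fun x => f x ^ (n + 1) - g x ^ (n + 1)) =O[l] fun x => e x * h x ^ n := by
  have geom_sum :
      (fun x => ∑ i ∈ Finset.range (n + 1), f x ^ i * g x ^ (n - i)) =O[l] fun x => h x ^ n := by
    refine IsBigO.fun_sum fun i hi => ?_
    have exponents_add : i + (n - i) = n := Nat.add_sub_cancel' (Finset.mem_range_succ_iff.mp hi)
    simpa only [← pow_add, exponents_add] using (hf.pow i).mul (hg.pow (n - i))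
  refine (hfg.mul geom_sum).congr_left fun x => ?_
  simpa using (Commute.all (f x) (g x)).mul_geom_sum₂ (n + 1)

theorem isBigO_div_sub {N D q h e : α → 𝕜} (hD : D =Θ[l] h) (hD₀ : ∀ᶠ x in l, D x ≠ 0)
    (hN : (fun x => N x - q x * D x) =O[l] fun x => e x * h x) :
    (fun x => N x / D x - q x) =O[l] e := by
  refine (hN.mul hD.inv.isBigO).congr' ?_ ?_
  · filter_upwards [hD₀] with x hx
    field_simp
  · filter_upwards [hD₀, hD.eq_zero_iff] with x hx hiff
    exact mul_inv_cancel_right₀ (mt hiff.mpr hx) (e x)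

theorem tendsto_of_sub_isLittleO (hg : Tendsto g l (𝓝 0))
    (h : (fun x => f x - (a + b * g x)) =o[l] g) : Tendsto f l (𝓝 a) := by
  simpa using (h.isBigO.trans_tendsto hg).add ((hg.const_mul b).const_add a)

theorem tendsto_sub_div_of_sub_isLittleO (hg : ∀ᶠ x in l, g x ≠ 0)
    (h : (fun x => f x - (a + b * g x)) =o[l] g) :
    Tendsto (fun x => (f x - a) / g x) l (𝓝 b) := by
  have quotient_lim := h.tendsto_div_nhds_zero.add_const b
  rw [zero_add] at quotient_lim
  refine quotient_lim.congr' ?_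
  filter_upwards [hg] with x hx
  field_simp
  ring

end Asymptotics

section Cosine

/-- The Taylor polynomial of `Real.cos` at `0` with `n` nonzero terms, hence of degree
`2 * n - 2` for `0 < n`. -/
noncomputable def cosTaylor (n : ℕ) (x : ℝ) : ℝ :=
  ∑ i ∈ Finset.range n, (-1) ^ i * x ^ (2 * i) / (2 * i).factorial

theorem taylorWithinEval_cos (n : ℕ) (x : ℝ) :
    taylorWithinEval Real.cos (2 * n) Set.univ 0 x = cosTaylor (n + 1) x := by
  induction n with
  | zero => simp [cosTaylor]
  | succ n ih =>
    have next_degree : 2 * (n + 1) = 2 * n + 1 + 1 := by ring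
    have odd_coeff : iteratedDeriv (2 * n + 1) Real.cos 0 = 0 := by simp
    have even_coeff : iteratedDeriv (2 * n + 1 + 1) Real.cos 0 = (-1) ^ (n + 1) := by
      rw [← next_degree, Real.iteratedDeriv_even_cos]
      simp
    rw [cosTaylor, Finset.sum_range_succ, ← cosTaylor, ← ih, next_degree, taylorWithinEval_succ,
      taylorWithinEval_succ, iteratedDerivWithin_univ, iteratedDerivWithin_univ, odd_coeff,
      even_coeff, Nat.factorial_succ (2 * n + 1)]
    simp only [smul_eq_mul, sub_zero, mul_zero, add_zero]
    push_cast
    field_simp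

theorem cos_sub_cosTaylor_isBigO (n : ℕ) :
    (fun x => Real.cos x - cosTaylor n x) =O[𝓝 0] fun x => x ^ (2 * n) := by
  have next : (fun x => Real.cos x - cosTaylor (n + 1) x) =O[𝓝 0] fun x => x ^ (2 * n) := by
    simpa only [taylorWithinEval_cos, sub_zero] using
      (taylor_isLittleO_univ (x₀ := 0) (n := 2 * n) Real.contDiff_cos).isBigO
  have last_term := isBigO_const_mul_self ((-1) ^ n / ((2 * n).factorial : ℝ))
    (fun x : ℝ => x ^ (2 * n)) (𝓝 0)
  refine (next.add last_term).congr_left fun x => ?_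
  rw [cosTaylor, cosTaylor, Finset.sum_range_succ]
  ring

theorem cos_const_mul_sub_cosTaylor_isBigO (c : ℝ) (n : ℕ) :
    (fun x => Real.cos (c * x) - cosTaylor n (c * x)) =O[𝓝 0] fun x => x ^ (2 * n) := by
  have lim : Tendsto (fun x : ℝ => c * x) (𝓝 0) (𝓝 0) := by
    simpa using (continuous_const_mul c).tendsto 0
  exact ((cos_sub_cosTaylor_isBigO n).comp_tendsto lim).trans
    ((isBigO_const_mul_self c _ _).pow (2 * n))

theorem sum_mul_cos_sub_sum_mul_cosTaylor_isBigO {ι : Type*} (s : Finset ι) {p : ι → ℝ → ℝ}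
    (hp : ∀ k ∈ s, ContinuousAt (p k) 0) (c : ι → ℝ) (n : ℕ) :
    (fun x => ∑ k ∈ s, p k x * Real.cos (c k * x) - ∑ k ∈ s, p k x * cosTaylor n (c k * x))
      =O[𝓝 0] fun x => x ^ (2 * n) := by
  simp only [← Finset.sum_sub_distrib, ← mul_sub]
  exact IsBigO.fun_sum fun k hk =>
    isBigO_mul_of_continuousAt (hp k hk) (cos_const_mul_sub_cosTaylor_isBigO (c k) n)

theorem two_mul_one_sub_cos_sub_isBigO :
    (fun v => 2 * (1 - Real.cos v) - v ^ 2 * (1 - v ^ 2 / 12)) =O[𝓝 0] fun v => v ^ 6 := by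
  refine ((cos_sub_cosTaylor_isBigO 3).const_mul_left (-2)).congr_left fun v => ?_
  simp only [cosTaylor, Finset.sum_range_succ, Finset.sum_range_zero, Nat.factorial]
  push_cast
  ring

theorem two_mul_one_sub_cos_pow_five_sub_isBigO :
    (fun v => (2 * (1 - Real.cos v)) ^ 5 - v ^ 10 * (1 - 5 / 12 * v ^ 2))
      =O[𝓝 0] fun v => v ^ 14 := by
  have approx : (fun v : ℝ => v ^ 2 * (1 - v ^ 2 / 12)) =O[𝓝 0] fun v => v ^ 2 := by
    exact (isBigO_mul_of_continuousAt (p := fun v : ℝ => 1 - v ^ 2 / 12) (by fun_prop)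
      (isBigO_refl (fun v : ℝ => v ^ 2) (𝓝 0))).congr_left fun v => mul_comm _ _
  have cos_factor : (fun v => 2 * (1 - Real.cos v)) =O[𝓝 0] fun v => v ^ 2 := by
    simpa using (two_mul_one_sub_cos_sub_isBigO.trans
      (isLittleO_pow_pow (by norm_num : 2 < 6)).isBigO).add approx
  have powers := isBigO_pow_succ_sub_pow_succ cos_factor approx
    two_mul_one_sub_cos_sub_isBigO 4
  simp only [← pow_mul, ← pow_add, Nat.reduceMul, Nat.reduceAdd] at powers
  have binomial_tail := isBigO_mul_of_continuousAt
    (p := fun v : ℝ => 10 / 12 ^ 2 - 10 / 12 ^ 3 * v ^ 2 + 5 / 12 ^ 4 * v ^ 4 - v ^ 6 / 12 ^ 5)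
    (by fun_prop) (isBigO_refl (fun v : ℝ => v ^ 14) (𝓝 0))
  exact (powers.add binomial_tail).congr_left fun v => by ring

end Cosine

section PFD0

/-- The coefficient of `cos (k * v)` in the numerator of `pfb3 v`, for `k = 0, …, 6`. -/
noncomputable def pfb3NumCoeff (v : ℝ) : Fin 7 → ℝ :=
  ![257184477 * v ^ 2, -367257540 * v ^ 2, 183567900 * v ^ 2, -18144000,
    36288000 - 16708985 * v ^ 2, 24862148 * v ^ 2 - 36288000, 18144000]

/-- The numerator of `pfb3` as a cosine sum. -/
noncomputable def pfb3Num (v : ℝ) : ℝ :=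
  ∑ k, pfb3NumCoeff v k * Real.cos (k * v)

/-- The denominator of `pfb3`. -/
noncomputable def pfb3Den (v : ℝ) : ℝ :=
  206438400 * v ^ 2 * Real.sin (v / 2) ^ 10

/-- The quadratic Taylor polynomial of `pfb3` at `0`, whose constant term is the classical
Quinlan–Tremaine coefficient. -/
noncomputable def pfb3Taylor (v : ℝ) : ℝ :=
  270875723 / 17740800 + -16301796103 / 6457651200 * v ^ 2

theorem pfb3_eq_div (v : ℝ) : pfb3 v = pfb3Num v / pfb3Den v := by
  rw [pfb3, pfb3Den]
  congr 1
  simp only [pfb3Num, pfb3NumCoeff, Fin.sum_univ_seven, Matrix.cons_val, Fin.coe_ofNat_eq_mod]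
  push_cast
  rw [zero_mul, one_mul, Real.cos_zero]
  ring

theorem pfb3Den_eq (v : ℝ) : pfb3Den v = 201600 * v ^ 2 * (2 * (1 - Real.cos v)) ^ 5 := by
  have half_angle : 2 * (1 - Real.cos v) = 4 * Real.sin (v / 2) ^ 2 := by
    rw [Real.sin_sq_eq_half_sub, mul_div_cancel₀ v two_ne_zero]
    ring
  rw [half_angle, pfb3Den]
  ring

theorem pfb3Den_isTheta : pfb3Den =Θ[𝓝 0] fun v => v ^ 12 := by
  have lim : Tendsto (fun v : ℝ => v / 2) (𝓝 0) (𝓝 0) := by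
    simpa using (continuous_id.div_const (2 : ℝ)).tendsto 0
  have sin_half : (fun v => Real.sin (v / 2)) =Θ[𝓝 0] fun v => v := by
    have scaled : (fun v => Real.sin (v / 2)) =Θ[𝓝 0] fun v => 2⁻¹ * v := by
      simpa only [Function.comp_def, id, div_eq_inv_mul] using
        (Real.isEquivalent_sin.comp_tendsto lim).isTheta
    exact (isTheta_const_mul_right (by norm_num)).mp scaled
  have sq : (fun v : ℝ => 206438400 * v ^ 2) =Θ[𝓝 0] fun v => v ^ 2 :=
    (isTheta_refl _ _).const_mul_left (by norm_num)
  unfold pfb3Den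
  simpa only [← pow_add, Nat.reduceAdd] using sq.mul (sin_half.pow 10)

theorem pfb3Den_sub_isBigO :
    (fun v => pfb3Den v - 201600 * v ^ 12 * (1 - 5 / 12 * v ^ 2)) =O[𝓝 0] fun v => v ^ 16 := by
  have scaled := (isBigO_const_mul_self 201600 (fun v : ℝ => v ^ 2) (𝓝 0)).mul
    two_mul_one_sub_cos_pow_five_sub_isBigO
  simp only [← pow_add, Nat.reduceAdd] at scaled
  refine scaled.congr_left fun v => ?_
  rw [pfb3Den_eq]
  ring

theorem sum_pfb3NumCoeff_mul_cosTaylor (v : ℝ) :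
    ∑ k, pfb3NumCoeff v k * cosTaylor 8 (k * v)
      = pfb3Taylor v * (201600 * v ^ 12 * (1 - 5 / 12 * v ^ 2))
        - 730822172713 / 384384 * v ^ 16 := by
  simp only [Fin.sum_univ_seven, pfb3NumCoeff, Matrix.cons_val, pfb3Taylor, cosTaylor,
    Finset.sum_range_succ, Finset.sum_range_zero, Nat.factorial, Fin.coe_ofNat_eq_mod]
  push_cast
  ring

theorem pfb3Num_sub_isBigO :
    (fun v => pfb3Num v - pfb3Taylor v * (201600 * v ^ 12 * (1 - 5 / 12 * v ^ 2)))
      =O[𝓝 0] fun v => v ^ 16 := by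
  have coeff_continuous (k : Fin 7) : ContinuousAt (fun v => pfb3NumCoeff v k) 0 := by
    unfold pfb3NumCoeff
    fin_cases k <;> dsimp only [Fin.reduceFinMk, Matrix.cons_val] <;> fun_prop
  have remainder := sum_mul_cos_sub_sum_mul_cosTaylor_isBigO Finset.univ
    (fun k _ => coeff_continuous k) (fun k : Fin 7 => (k : ℝ)) 8
  have tail := isBigO_const_mul_self (730822172713 / 384384) (fun v : ℝ => v ^ 16) (𝓝 0)
  refine (remainder.sub tail).congr_left fun v => ?_
  rw [sum_pfb3NumCoeff_mul_cosTaylor, pfb3Num]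
  ring

theorem pfb3_sub_pfb3Taylor_isBigO :
    (fun v => pfb3 v - pfb3Taylor v) =O[𝓝[≠] 0] fun v => v ^ 4 := by
  have taylor_continuous : ContinuousAt pfb3Taylor 0 := by
    unfold pfb3Taylor
    fun_prop
  have num_sub : (fun v => pfb3Num v - pfb3Taylor v * pfb3Den v)
      =O[𝓝 0] fun v => v ^ 4 * v ^ 12 := by
    simp only [← pow_add, Nat.reduceAdd]
    refine (pfb3Num_sub_isBigO.sub
      (isBigO_mul_of_continuousAt taylor_continuous pfb3Den_sub_isBigO)).congr_left fun v => ?_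
    ring
  have den_theta := pfb3Den_isTheta.mono (nhdsWithin_le_nhds (s := {0}ᶜ))
  have den_ne_zero : ∀ᶠ v in 𝓝[≠] 0, pfb3Den v ≠ 0 := by
    filter_upwards [den_theta.eq_zero_iff, self_mem_nhdsWithin] with v hiff hv
    exact mt hiff.mp (pow_ne_zero 12 hv)
  simp only [pfb3_eq_div]
  exact isBigO_div_sub den_theta den_ne_zero (num_sub.mono nhdsWithin_le_nhds)

theorem pfd0_b3_limit_general :
    Tendsto pfb3 (𝓝[≠] 0) (𝓝 (270875723 / 17740800)) ∧
    Tendsto (fun v : ℝ => (pfb3 v - (270875723 / 17740800)) / v ^ 2)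
      (𝓝[≠] 0) (𝓝 (-16301796103 / 6457651200)) := by
  have expansion : (fun v => pfb3 v - pfb3Taylor v) =o[𝓝[≠] 0] fun v => v ^ 2 :=
    pfb3_sub_pfb3Taylor_isBigO.trans_isLittleO
      ((isLittleO_pow_pow (by norm_num)).mono nhdsWithin_le_nhds)
  have sq_lim : Tendsto (fun v : ℝ => v ^ 2) (𝓝[≠] 0) (𝓝 0) := by
    simpa using ((continuous_pow 2).tendsto (0 : ℝ)).mono_left nhdsWithin_le_nhds
  have sq_ne_zero : ∀ᶠ v : ℝ in 𝓝[≠] 0, v ^ 2 ≠ 0 :=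
    eventually_mem_nhdsWithin.mono fun v hv => pow_ne_zero 2 hv
  exact ⟨tendsto_of_sub_isLittleO sq_lim expansion,
    tendsto_sub_div_of_sub_isLittleO sq_ne_zero expansion⟩

end PFD0

/-- The PF-D0 coefficient `pfb3` tends to the corresponding classical
Quinlan–Tremaine coefficient as `v → 0⁺`, with the stated `v²`-Taylor coefficient. -/
theorem pfd0_b3_limit :
    Tendsto pfb3 (nhdsWithin 0 (Set.Ioi 0)) (nhds (270875723 / 17740800)) ∧
    Tendsto (fun v : ℝ => (pfb3 v - (270875723 / 17740800)) / v ^ 2)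
      (nhdsWithin 0 (Set.Ioi 0)) (nhds (-16301796103 / 6457651200)) := by
  exact pfd0_b3_limit_general.imp (·.mono_left (nhdsGT_le_nhdsNE 0))
    (·.mono_left (nhdsGT_le_nhdsNE 0))
end

section
/- The PF-D1 coefficient function c1 satisfies lim_{v→0⁺} c1(v) = 90987349/53222400 and lim_{v→0⁺} (c1(v) − 90987349/53222400)/v² = −16301796103/145297152000; in particular c1 tends to the corresponding coefficient of the classical Quinlan–Tremaine method as v → 0, and its v²-Taylor coefficient is twice that of the PF-D0 coefficient b1. -/
open Filter

/-- The variable coefficient `c₁(v)` of the method PF-D1 (phase lag and its first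
derivative vanish at frequency `v`). -/
noncomputable def pfd1c1 (v : ℝ) : ℝ :=
  (53760 * (2 * Real.cos v + 2 * Real.cos (2 * v) + 2 * Real.cos (3 * v)
        + 2 * Real.cos (5 * v) + 1) * (Real.sin (v / 2)) ^ 3
      + v * ((304823 * Real.cos (v / 2) - 828603 * Real.cos (3 * v / 2)
          + 554639 * Real.cos (5 * v / 2) - 272779 * Real.cos (7 * v / 2)) * v ^ 2
        + 6720 * (7 * Real.cos (5 * v / 2) - 15 * Real.cos (7 * v / 2)
          + 2 * (9 * Real.cos (9 * v / 2) - 6 * Real.cos (11 * v / 2)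
            + Real.cos (13 * v / 2)))))
    / (6881280 * v ^ 3 * (Real.sin (v / 2)) ^ 10 * Real.cos (v / 2))

/-!
Linearizing the trigonometric products turns the numerator and the denominator of `c₁` into sums
of terms `v ^ p * cos (k * v)` and `sin (k * v)`, whose Taylor coefficients are power sums of the
frequencies. Both vanish to order exactly `13` at `0`, so expanding them up to `o(v ^ 16)` and
dividing gives `c₁(v) = A + B * v ^ 2 + o(v ^ 3)`, and both limits can be read off.
-/

open Asymptotics Topology Finset Nat

section Asymptotics

variable {α 𝕜 : Type*} [NormedField 𝕜] {l : Filter α}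

theorem div_sub_isLittleO {f g r u w : α → 𝕜} (hu : ∀ᶠ x in l, u x ≠ 0) (hug : u =O[l] g)
    (h : (fun x => f x - r x * g x) =o[l] fun x => u x * w x) :
    (fun x => f x / g x - r x) =o[l] w := by
  have hg : ∀ᶠ x in l, g x ≠ 0 := by
    filter_upwards [hu, hug.eq_zero_imp] with x hux hgx using mt hgx hux
  have hinv : (fun x => (g x)⁻¹) =O[l] fun x => (u x)⁻¹ :=
    hug.inv_rev (hu.mono fun _ hux hux0 => absurd hux0 hux)
  refine (h.mul_isBigO hinv).congr' ?_ ?_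
  · filter_upwards [hg] with x hgx
    field_simp
  · filter_upwards [hu] with x hux
    field_simp

theorem tendsto_sub_div_of_isLittleO {f g : α → 𝕜} {a b : 𝕜} (hg : ∀ᶠ x in l, g x ≠ 0)
    (h : (fun x => f x - (a + b * g x)) =o[l] g) :
    Tendsto (fun x => (f x - a) / g x) l (𝓝 b) := by
  refine (zero_add b ▸ h.tendsto_div_nhds_zero.add_const b).congr' ?_
  filter_upwards [hg] with x hx
  field_simp
  ring

theorem tendsto_of_tendsto_sub_div {f g : α → 𝕜} {a b : 𝕜} (hg : ∀ᶠ x in l, g x ≠ 0)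
    (hg0 : Tendsto g l (𝓝 0)) (h : Tendsto (fun x => (f x - a) / g x) l (𝓝 b)) :
    Tendsto f l (𝓝 a) := by
  have hlim : Tendsto (fun x => (f x - a) / g x * g x + a) l (𝓝 a) := by
    simpa only [mul_zero, zero_add] using (h.mul hg0).add_const a
  refine hlim.congr' ?_
  filter_upwards [hg] with x hx
  rw [div_mul_cancel₀ _ hx, sub_add_cancel]

theorem isLittleO_add_sub_add {f g p q u : α → 𝕜} (hf : (fun x => f x - p x) =o[l] u)
    (hg : (fun x => g x - q x) =o[l] u) :
    (fun x => f x + g x - (p x + q x)) =o[l] u :=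
  (hf.add hg).congr_left fun _ => (add_sub_add_comm _ _ _ _).symm

end Asymptotics

section Taylor

theorem taylorWithinEval_cos_zero (n : ℕ) (t : ℝ) :
    taylorWithinEval Real.cos (2 * n + 1) Set.univ 0 t =
      ∑ j ∈ range (n + 1), (-1) ^ j / (2 * j)! * t ^ (2 * j) := by
  induction n with
  | zero => simp [taylorWithinEval_succ, iteratedDerivWithin_univ]
  | succ n ih =>
    rw [taylorWithinEval_succ, Nat.mul_succ, taylorWithinEval_succ, ih, sum_range_succ _ (n + 1),
      show 2 * n + 1 + 1 = 2 * (n + 1) from rfl]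
    simp only [iteratedDerivWithin_univ, Real.iteratedDeriv_even_cos, Real.iteratedDeriv_odd_cos]
    simp only [mul_succ, factorial_succ, cast_mul, cast_add, cast_ofNat, cast_one, sub_zero,
      Pi.mul_apply, Pi.pow_apply, Pi.neg_apply, Pi.one_apply, Real.cos_zero, Real.sin_zero,
      smul_eq_mul, mul_one, mul_zero, add_zero, add_right_inj]
    field_simp

theorem taylorWithinEval_sin_zero (n : ℕ) (t : ℝ) :
    taylorWithinEval Real.sin (2 * n) Set.univ 0 t =
      ∑ j ∈ range n, (-1) ^ j / (2 * j + 1)! * t ^ (2 * j + 1) := by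
  induction n with
  | zero => simp
  | succ n ih =>
    rw [Nat.mul_succ, taylorWithinEval_succ, taylorWithinEval_succ, ih, sum_range_succ]
    simp only [factorial_succ, cast_mul, cast_add, cast_ofNat, cast_one, sub_zero,
      iteratedDerivWithin_univ, Real.iteratedDeriv_add_one_sin, Real.iteratedDeriv_even_cos,
      Real.iteratedDeriv_add_one_cos, Real.iteratedDeriv_even_sin, Pi.mul_apply, Pi.pow_apply,
      Pi.neg_apply, Pi.one_apply, Real.cos_zero, Real.sin_zero, smul_eq_mul, mul_one, mul_zero,
      neg_zero, add_zero, add_right_inj]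
    field_simp

theorem cos_sub_taylor_isLittleO (n : ℕ) :
    (fun t : ℝ => Real.cos t -
        ∑ j ∈ range (n + 1), (-1) ^ j / (2 * j)! * t ^ (2 * j))
      =o[𝓝 0] fun t => t ^ (2 * n + 1) := by
  simpa only [taylorWithinEval_cos_zero, sub_zero] using
    taylor_isLittleO_univ (x₀ := 0) (n := 2 * n + 1) Real.contDiff_cos

theorem sin_sub_taylor_isLittleO (n : ℕ) :
    (fun t : ℝ => Real.sin t -
        ∑ j ∈ range n, (-1) ^ j / (2 * j + 1)! * t ^ (2 * j + 1))
      =o[𝓝 0] fun t => t ^ (2 * n) := by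
  simpa only [taylorWithinEval_sin_zero, sub_zero] using
    taylor_isLittleO_univ (x₀ := 0) (n := 2 * n) Real.contDiff_sin

theorem isLittleO_pow_comp_const_mul {𝕜 E : Type*} [NormedField 𝕜] [NormedAddCommGroup E]
    {f : 𝕜 → E} {n : ℕ} (hf : f =o[𝓝 0] fun t => t ^ n) (a : 𝕜) :
    (fun v => f (a * v)) =o[𝓝 0] fun v => v ^ n := by
  have hlim : Tendsto (fun v : 𝕜 => a * v) (𝓝 0) (𝓝 0) :=
    (continuous_const_mul a).tendsto' 0 0 (mul_zero a)
  refine (hf.comp_tendsto hlim).trans_isBigO ?_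
  simp only [Function.comp_def, mul_pow]
  exact (isBigO_refl _ _).const_mul_left _

end Taylor

section TrigSum

variable {ι : Type*} [Fintype ι]

/-- The trigonometric sum `∑ wᵢ cos (kᵢ v)` with weights `w` and frequencies `k`. -/
noncomputable def cosSum (w k : ι → ℝ) (v : ℝ) : ℝ :=
  ∑ i, w i * Real.cos (k i * v)

/-- The trigonometric sum `∑ wᵢ sin (kᵢ v)` with weights `w` and frequencies `k`. -/
noncomputable def sinSum (w k : ι → ℝ) (v : ℝ) : ℝ :=
  ∑ i, w i * Real.sin (k i * v)

theorem cosSum_sub_taylor_isLittleO (w k : ι → ℝ) (n : ℕ) :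
    (fun v => cosSum w k v -
        ∑ j ∈ range (n + 1), (-1) ^ j / (2 * j)! * (∑ i, w i * k i ^ (2 * j)) * v ^ (2 * j))
      =o[𝓝 0] fun v => v ^ (2 * n + 1) := by
  refine (IsLittleO.sum (s := univ) fun i _ => (isLittleO_pow_comp_const_mul
    (cos_sub_taylor_isLittleO n) (k i)).const_mul_left (w i)).congr_left fun v => ?_
  rw [Finset.sum_apply]
  simp only [cosSum, mul_sub, sum_sub_distrib, mul_sum, sum_mul]
  rw [sum_comm (s := univ)]
  congr! 3
  ring

theorem sinSum_sub_taylor_isLittleO (w k : ι → ℝ) (n : ℕ) :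
    (fun v => sinSum w k v - ∑ j ∈ range n,
        (-1) ^ j / (2 * j + 1)! * (∑ i, w i * k i ^ (2 * j + 1)) * v ^ (2 * j + 1))
      =o[𝓝 0] fun v => v ^ (2 * n) := by
  refine (IsLittleO.sum (s := univ) fun i _ => (isLittleO_pow_comp_const_mul
    (sin_sub_taylor_isLittleO n) (k i)).const_mul_left (w i)).congr_left fun v => ?_
  rw [Finset.sum_apply]
  simp only [sinSum, mul_sub, sum_sub_distrib, mul_sum, sum_mul]
  rw [sum_comm (s := univ)]
  congr! 3
  ring

theorem pow_mul_cosSum_sub_taylor_isLittleO (p : ℕ) (w k : ι → ℝ) (n : ℕ) :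
    (fun v => v ^ p * cosSum w k v - v ^ p *
        ∑ j ∈ range (n + 1), (-1) ^ j / (2 * j)! * (∑ i, w i * k i ^ (2 * j)) * v ^ (2 * j))
      =o[𝓝 0] fun v => v ^ (p + (2 * n + 1)) := by
  simpa only [mul_sub, pow_add] using
    (isBigO_refl (fun v : ℝ => v ^ p) _).mul_isLittleO (cosSum_sub_taylor_isLittleO w k n)

end TrigSum

section Linearization

theorem exp_ofNat_mul (n : ℕ) [n.AtLeastTwo] (x : ℂ) :
    Complex.exp (ofNat(n) * x) = Complex.exp x ^ n :=
  Complex.exp_nat_mul x n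

theorem four_mul_cos_sum_mul_sin_cube (x : ℂ) :
    4 * ((2 * Complex.cos (2 * x) + 2 * Complex.cos (4 * x) + 2 * Complex.cos (6 * x)
        + 2 * Complex.cos (10 * x) + 1) * Complex.sin x ^ 3) =
      -Complex.sin (5 * x) + 3 * Complex.sin (7 * x) - 4 * Complex.sin (9 * x)
        + 3 * Complex.sin (11 * x) - Complex.sin (13 * x) := by
  simp only [Complex.cos, Complex.sin, neg_mul, mul_assoc, Complex.exp_neg,
    exp_ofNat_mul, div_pow, mul_pow, Complex.I_pow_three]
  field_simp
  ring

theorem sin_pow_ten_mul_cos (x : ℂ) :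
    1024 * (Complex.sin x ^ 10 * Complex.cos x) =
      42 * Complex.cos x - 90 * Complex.cos (3 * x) + 75 * Complex.cos (5 * x)
        - 35 * Complex.cos (7 * x) + 9 * Complex.cos (9 * x) - Complex.cos (11 * x) := by
  have I_pow_ten : Complex.I ^ 10 = -1 := by simp [Complex.I_pow_eq_pow_mod 10]
  simp only [Complex.cos, Complex.sin, neg_mul, mul_assoc, Complex.exp_neg,
    exp_ofNat_mul, div_pow, mul_pow, I_pow_ten]
  field_simp
  ring

end Linearization

/-- The numerator of `pfd1c1` with its trigonometric product linearized; the factor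
`13440 = 53760 / 4` comes from `four_mul_cos_sum_mul_sin_cube`, and `v ^ 1` is kept explicit so that
every cosine sum carries a power of `v`. -/
noncomputable def pfd1c1Num (v : ℝ) : ℝ :=
  sinSum ((13440 : ℝ) • ![-1, 3, -4, 3, -1]) ![5 / 2, 7 / 2, 9 / 2, 11 / 2, 13 / 2] v
    + v ^ 1 * cosSum ((6720 : ℝ) • ![7, -15, 18, -12, 2])
        ![5 / 2, 7 / 2, 9 / 2, 11 / 2, 13 / 2] v
    + v ^ 3 * cosSum ![304823, -828603, 554639, -272779] ![1 / 2, 3 / 2, 5 / 2, 7 / 2] v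

/-- The denominator of `pfd1c1` with its trigonometric product linearized; the factor
`6720 = 6881280 / 1024` comes from `sin_pow_ten_mul_cos`. -/
noncomputable def pfd1c1Den (v : ℝ) : ℝ :=
  v ^ 3 * cosSum ((6720 : ℝ) • ![42, -90, 75, -35, 9, -1])
    ![1 / 2, 3 / 2, 5 / 2, 7 / 2, 9 / 2, 11 / 2] v

theorem pfd1c1_eq_num_div_den (v : ℝ) : pfd1c1 v = pfd1c1Num v / pfd1c1Den v := by
  have hn := four_mul_cos_sum_mul_sin_cube (v / 2)
  have hd := sin_pow_ten_mul_cos (v / 2)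
  norm_cast at hn hd
  rw [pfd1c1]
  congr 1
  · simp only [pfd1c1Num, sinSum, cosSum, Pi.smul_apply, smul_eq_mul, Fin.sum_univ_four,
      Fin.sum_univ_five, Matrix.cons_val]
    ring_nf at hn ⊢
    linear_combination 13440 * hn
  · simp only [pfd1c1Den, cosSum, Pi.smul_apply, smul_eq_mul, Fin.sum_univ_six,
      Matrix.cons_val]
    ring_nf at hd ⊢
    linear_combination 6720 * v ^ 3 * hd

theorem pfd1c1Num_sub_taylor_isLittleO :
    (fun v => pfd1c1Num v - (90987349 / 7920 * v ^ 13 - 201132451249 / 28828800 * v ^ 15))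
      =o[𝓝 0] fun v => v ^ 16 := by
  refine (isLittleO_add_sub_add
    (isLittleO_add_sub_add (sinSum_sub_taylor_isLittleO _ _ 8)
      (pow_mul_cosSum_sub_taylor_isLittleO 1 _ _ 7))
    (pow_mul_cosSum_sub_taylor_isLittleO 3 _ _ 6)).congr_left
    fun v => congrArg (pfd1c1Num v - ·) ?_
  simp only [sum_range_succ, range_zero, sum_empty, Pi.smul_apply, smul_eq_mul,
    Fin.sum_univ_four, Fin.sum_univ_five, Matrix.cons_val, Nat.factorial]
  push_cast
  ring

theorem pfd1c1Den_sub_taylor_isLittleO :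
    (fun v => pfd1c1Den v - (6720 * v ^ 13 - 3640 * v ^ 15)) =o[𝓝 0] fun v => v ^ 16 := by
  refine (pow_mul_cosSum_sub_taylor_isLittleO 3 _ _ 6).congr_left
    fun v => congrArg (pfd1c1Den v - ·) ?_
  simp only [sum_range_succ, range_zero, sum_empty, Pi.smul_apply, smul_eq_mul,
    Fin.sum_univ_six, Matrix.cons_val, Nat.factorial]
  push_cast
  ring

theorem pow_thirteen_isBigO_pfd1c1Den : (fun v : ℝ => v ^ 13) =O[𝓝 0] pfd1c1Den := by
  have hequiv : pfd1c1Den ~[𝓝 0] fun v => 6720 * v ^ 13 := by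
    have hlead : (fun v => pfd1c1Den v - 6720 * v ^ 13) =o[𝓝 0] fun v => v ^ 13 :=
      ((pfd1c1Den_sub_taylor_isLittleO.trans (isLittleO_pow_pow (by norm_num))).sub
        ((isLittleO_pow_pow (by norm_num : 13 < 15)).const_mul_left 3640)).congr_left
        fun v => by ring
    exact hlead.const_mul_right' (by norm_num)
  exact (isBigO_self_const_mul (by norm_num) _ _).trans hequiv.isBigO_symm

theorem pfd1c1Num_sub_mul_pfd1c1Den_isLittleO :
    (fun v => pfd1c1Num v
        - (90987349 / 53222400 - 16301796103 / 145297152000 * v ^ 2) * pfd1c1Den v)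
      =o[𝓝 0] fun v => v ^ 13 * v ^ 3 := by
  have hbdd : (fun v : ℝ => 90987349 / 53222400 - 16301796103 / 145297152000 * v ^ 2)
      =O[𝓝 0] fun _ => (1 : ℝ) :=
    (by fun_prop : Continuous _).continuousAt.isBigO_one ℝ
  have hden := (hbdd.mul_isLittleO pfd1c1Den_sub_taylor_isLittleO).congr_right fun _ => one_mul _
  have hrem : (fun v : ℝ => v ^ 17) =o[𝓝 0] fun v => v ^ 16 :=
    isLittleO_pow_pow (by norm_num)
  refine ((pfd1c1Num_sub_taylor_isLittleO.sub hden).add (hrem.const_mul_left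
    (-(16301796103 / 145297152000 * 3640)))).congr (fun v => ?_) fun v => ?_ <;> ring

theorem pfd1c1_sub_taylor_isLittleO :
    (fun v => pfd1c1 v - (90987349 / 53222400 - 16301796103 / 145297152000 * v ^ 2))
      =o[𝓝[≠] 0] fun v => v ^ 3 := by
  simp only [pfd1c1_eq_num_div_den]
  refine div_sub_isLittleO (u := fun v => v ^ 13) ?_
    (pow_thirteen_isBigO_pfd1c1Den.mono nhdsWithin_le_nhds)
    (pfd1c1Num_sub_mul_pfd1c1Den_isLittleO.mono nhdsWithin_le_nhds)
  filter_upwards [self_mem_nhdsWithin] with v hv using pow_ne_zero 13 hv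

/-- The PF-D1 coefficient `c₁` tends to the classical Quinlan–Tremaine coefficient
as `v → 0⁺`, and its `v²`-Taylor coefficient is twice that of the PF-D0
coefficient `b₁`. -/
theorem pfd1_c1_limit :
    Tendsto pfd1c1 (nhdsWithin 0 (Set.Ioi 0)) (nhds (90987349 / 53222400)) ∧
    Tendsto (fun v : ℝ => (pfd1c1 v - 90987349 / 53222400) / v ^ 2)
      (nhdsWithin 0 (Set.Ioi 0)) (nhds (-16301796103 / 145297152000)) := by
  have hsq_ne : ∀ᶠ v in 𝓝[>] (0 : ℝ), v ^ 2 ≠ 0 := by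
    filter_upwards [self_mem_nhdsWithin] with v hv using pow_ne_zero 2 hv.ne'
  have hsq_tendsto : Tendsto (fun v : ℝ => v ^ 2) (𝓝[>] 0) (𝓝 0) :=
    ((continuous_pow 2).tendsto' 0 0 (zero_pow two_ne_zero)).mono_left nhdsWithin_le_nhds
  have hquad : Tendsto (fun v : ℝ => (pfd1c1 v - 90987349 / 53222400) / v ^ 2)
      (𝓝[>] 0) (𝓝 (-16301796103 / 145297152000)) := by
    have hexp := (pfd1c1_sub_taylor_isLittleO.mono (nhdsGT_le_nhdsNE 0)).trans
      ((isLittleO_pow_pow (by norm_num : 2 < 3)).mono nhdsWithin_le_nhds)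
    exact tendsto_sub_div_of_isLittleO hsq_ne (hexp.congr_left fun v => by ring)
  exact ⟨tendsto_of_tendsto_sub_div hsq_ne hsq_tendsto hquad, hquad⟩
end
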